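/- Let $B\subset\mathbb{R}^N$ be a compact, convex, symmetric set with nonempty interior whose polar body $B^*$ is a zonoid. Then $\frac{4^N}{N!} \le \mathrm{Vol}_N(B)\,\mathrm{Vol}_N(B^*)$. -/

import Mathlib

open MeasureTheory


namespace Reisner

open scoped ENNReal Pointwise

lemma bm1_compact {K L C : Set ℝ} (hK : IsCompact K) (hL : IsCompact L) (hKn : K.Nonempty)
    (hLn : L.Nonempty) {l m : ℝ} (hl : 0 < l) (hm : 0 < m)
    (hC : ∀ a ∈ K, ∀ b ∈ L, l * a + m * b ∈ C) :
    ENNReal.ofReal l * volume K + ENNReal.ofReal m * volume L ≤ volume C := by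
  obtain ⟨a, ha, hamax⟩ := hK.exists_isGreatest hKn
  obtain ⟨b, hb, hbmin⟩ := hL.exists_isLeast hLn
  have hvol : ∀ (c d : ℝ) (S : Set ℝ), 0 < c →
      volume ((fun x => d + x) '' (c • S)) = ENNReal.ofReal c * volume S := by
    intro c d S hc
    rw [Set.image_add_left, measure_preimage_add, Measure.addHaar_smul]
    simp [abs_of_pos hc]
  have h1 : (fun x => m * b + x) '' (l • K) ∪ (fun x => l * a + x) '' (m • L) ⊆ C := by
    rintro x (⟨_, ⟨y, hy, rfl⟩, rfl⟩ | ⟨_, ⟨y, hy, rfl⟩, rfl⟩)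
    · have := hC y hy b hb
      simpa [add_comm] using this
    · have := hC a ha y hy
      simpa [add_comm] using this
  have h2 : (fun x => m * b + x) '' (l • K) ∩ (fun x => l * a + x) '' (m • L) ⊆ {l * a + m * b} := by
    rintro x ⟨⟨_, ⟨y, hy, rfl⟩, rfl⟩, ⟨_, ⟨z, hz, rfl⟩, h⟩⟩
    have h3 := hamax hy
    have h4 := hbmin hz
    simp only [smul_eq_mul] at h ⊢
    have h5 : l * y ≤ l * a := by gcongr
    have h6 : m * b ≤ m * z := by gcongr
    simp only [Set.mem_singleton_iff]
    linarith
  have h3 : MeasurableSet ((fun x => l * a + x) '' (m • L)) :=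
    ((hL.smul m).image (by fun_prop)).measurableSet
  have h4 := measure_union_add_inter (μ := (volume : Measure ℝ)) ((fun x => m * b + x) '' (l • K)) h3
  have h5 : volume ((fun x => m * b + x) '' (l • K) ∩ (fun x => l * a + x) '' (m • L)) = 0 :=
    measure_mono_null h2 (by simp)
  rw [h5, add_zero, hvol _ _ _ hl, hvol _ _ _ hm] at h4
  rw [← h4]
  exact measure_mono h1

lemma bm1 {A B C : Set ℝ} (hA : MeasurableSet A) (hB : MeasurableSet B) (hAn : A.Nonempty)
    (hBn : B.Nonempty) {l m : ℝ} (hl : 0 < l) (hm : 0 < m)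
    (hC : ∀ a ∈ A, ∀ b ∈ B, l * a + m * b ∈ C) :
    ENNReal.ofReal l * volume A + ENNReal.ofReal m * volume B ≤ volume C := by
  have key : ∀ S : Set ℝ, MeasurableSet S →
      volume S = ⨆ K : {K : Set ℝ // K ⊆ S ∧ IsCompact K}, volume K.1 := by
    intro S hS
    rw [hS.measure_eq_iSup_isCompact, iSup_subtype]
    simp only [iSup_and]
  obtain ⟨a, ha⟩ := hAn
  obtain ⟨b, hb⟩ := hBn
  have : ∀ S : Set ℝ, Nonempty {K : Set ℝ // K ⊆ S ∧ IsCompact K} :=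
    fun S => ⟨⟨∅, by simp, by simp⟩⟩
  rw [key A hA, key B hB, ENNReal.mul_iSup, ENNReal.mul_iSup, ENNReal.iSup_add]
  refine iSup_le fun K => ?_
  rw [ENNReal.add_iSup]
  refine iSup_le fun L => ?_
  have h := bm1_compact (K := insert a K.1) (L := insert b L.1) (C := C) (K.2.2.insert a)
    (L.2.2.insert b) (by simp) (by simp) hl hm (by
      rintro x (rfl | hx) y (rfl | hy)
      · exact hC _ ha _ hb
      · exact hC _ ha _ (L.2.1 hy)
      · exact hC _ (K.2.1 hx) _ hb
      · exact hC _ (K.2.1 hx) _ (L.2.1 hy))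
  refine le_trans ?_ h
  gcongr <;> exact Set.subset_insert _ _

lemma amgm (a b : ℝ≥0∞) {l m : ℝ} (hl : 0 < l) (hm : 0 < m) (hlm : l + m = 1) :
    a ^ l * b ^ m ≤ ENNReal.ofReal l * a + ENNReal.ofReal m * b := by
  have hpq : (l⁻¹).HolderConjugate m⁻¹ := by
    refine Real.holderConjugate_iff.2 ⟨?_, by simpa using hlm⟩
    exact (one_lt_inv₀ hl).2 (by linarith)
  have := ENNReal.young_inequality (a ^ l) (b ^ m) hpq
  rw [← ENNReal.rpow_mul, ← ENNReal.rpow_mul, mul_inv_cancel₀ hl.ne', mul_inv_cancel₀ hm.ne',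
    ENNReal.rpow_one, ENNReal.rpow_one, ENNReal.ofReal_inv_of_pos hl, ENNReal.ofReal_inv_of_pos hm,
    div_eq_mul_inv, div_eq_mul_inv, inv_inv, inv_inv] at this
  rwa [mul_comm _ a, mul_comm _ b]

/-- Layer cake for functions bounded by one. -/
lemma layer {f : ℝ → ℝ≥0∞} (hf : Measurable f) (hf1 : ∀ x, f x ≤ 1) :
    ∫⁻ x, f x = ∫⁻ t in Set.Ioo (0:ℝ) 1, volume {x | ENNReal.ofReal t < f x} := by
  have h := lintegral_eq_lintegral_meas_lt (volume : Measure ℝ) (f := fun x => (f x).toReal)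
    (Filter.Eventually.of_forall fun x => ENNReal.toReal_nonneg) hf.ennreal_toReal.aemeasurable
  have hfin : ∀ x, f x ≠ ∞ := fun x => ((hf1 x).trans_lt ENNReal.one_lt_top).ne
  simp only [ENNReal.ofReal_toReal (hfin _)] at h
  have hset : ∀ t ∈ Set.Ioi (0:ℝ), {x | t < (f x).toReal} = {x | ENNReal.ofReal t < f x} := by
    intro t ht
    ext x
    exact (ENNReal.ofReal_lt_iff_lt_toReal (le_of_lt ht) (hfin x)).symm
  rw [h, setLIntegral_congr_fun measurableSet_Ioi (fun t ht => by rw [hset t ht])]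
  rw [← Set.Ioo_union_Ici_eq_Ioi (zero_lt_one (α := ℝ)), lintegral_union measurableSet_Ici]
  · have : ∫⁻ t in Set.Ici (1:ℝ), volume {x | ENNReal.ofReal t < f x} = 0 := by
      rw [setLIntegral_congr_fun (g := fun _ => 0) measurableSet_Ici]
      · simp
      · intro t ht
        have : {x | ENNReal.ofReal t < f x} = ∅ := by
          ext x
          simp only [Set.mem_ofPred_eq, Set.mem_empty_iff_false, iff_false, not_lt]
          exact (hf1 x).trans (by simpa using ht)
        simp [this]
    rw [this, add_zero]
  · rw [Set.disjoint_left]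
    intro x hx hx'
    exact absurd hx.2 (not_lt.2 hx')

lemma pl1_norm {f g h : ℝ → ℝ≥0∞} (hf : Measurable f) (hg : Measurable g) (hh : Measurable h)
    {l m : ℝ} (hl : 0 < l) (hm : 0 < m) (hlm : l + m = 1)
    (hf1 : ⨆ x, f x = 1) (hg1 : ⨆ x, g x = 1)
    (H : ∀ x y, f x ^ l * g y ^ m ≤ h (l * x + m * y)) :
    ENNReal.ofReal l * (∫⁻ x, f x) + ENNReal.ofReal m * (∫⁻ x, g x) ≤ ∫⁻ x, h x := by
  have hfle : ∀ x, f x ≤ 1 := fun x => hf1 ▸ le_iSup f x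
  have hgle : ∀ x, g x ≤ 1 := fun x => hg1 ▸ le_iSup g x
  have h1 : ∫⁻ x, min (h x) 1 ≤ ∫⁻ x, h x := lintegral_mono fun x => min_le_left _ _
  refine le_trans ?_ h1
  have mf : Measurable fun t : ℝ => volume {x | ENNReal.ofReal t < f x} :=
    (Antitone.measurable (fun a b hab => measure_mono fun x hx =>
      lt_of_le_of_lt (ENNReal.ofReal_le_ofReal hab) hx))
  have mg : Measurable fun t : ℝ => volume {x | ENNReal.ofReal t < g x} :=
    (Antitone.measurable (fun a b hab => measure_mono fun x hx =>
      lt_of_le_of_lt (ENNReal.ofReal_le_ofReal hab) hx))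
  rw [layer hf hfle, layer hg hgle, layer (f := fun x => min (h x) 1) (hh.min measurable_const)
    (fun x => min_le_right _ _), ← lintegral_const_mul _ mf, ← lintegral_const_mul _ mg,
    ← lintegral_add_left (mf.const_mul _)]
  refine setLIntegral_mono' measurableSet_Ioo fun t ht => ?_
  have ht1 : ENNReal.ofReal t < 1 := by simpa using ht.2
  refine bm1 (measurableSet_lt measurable_const hf) (measurableSet_lt measurable_const hg) ?_ ?_
    hl hm ?_
  · rw [← hf1] at ht1
    exact lt_iSup_iff.1 ht1
  · rw [← hg1] at ht1
    exact lt_iSup_iff.1 ht1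
  · intro a ha b hb
    refine lt_min (lt_of_lt_of_le ?_ (H a b)) ht1
    calc ENNReal.ofReal t = ENNReal.ofReal t ^ l * ENNReal.ofReal t ^ m := by
          rw [← ENNReal.rpow_add_of_nonneg _ _ hl.le hm.le, hlm, ENNReal.rpow_one]
      _ < f a ^ l * g b ^ m := by
          exact ENNReal.mul_lt_mul (ENNReal.rpow_lt_rpow ha hl) (ENNReal.rpow_lt_rpow hb hm)

lemma pl1_bdd {f g h : ℝ → ℝ≥0∞} (hf : Measurable f) (hg : Measurable g) (hh : Measurable h)
    {l m : ℝ} (hl : 0 < l) (hm : 0 < m) (hlm : l + m = 1)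
    (hf1 : ⨆ x, f x ≠ ∞) (hg1 : ⨆ x, g x ≠ ∞)
    (H : ∀ x y, f x ^ l * g y ^ m ≤ h (l * x + m * y)) :
    (∫⁻ x, f x) ^ l * (∫⁻ x, g x) ^ m ≤ ∫⁻ x, h x := by
  set a := ⨆ x, f x with ha
  set b := ⨆ x, g x with hb
  by_cases ha0 : a = 0
  · have : ∀ x, f x = 0 := fun x => le_antisymm (ha0 ▸ le_iSup f x) bot_le
    simp [this, ENNReal.zero_rpow_of_pos hl]
  by_cases hb0 : b = 0
  · have : ∀ x, g x = 0 := fun x => le_antisymm (hb0 ▸ le_iSup g x) bot_le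
    simp [this, ENNReal.zero_rpow_of_pos hm]
  have hal0 : a ^ l ≠ 0 := by simp [ha0, hf1]
  have hbm0 : b ^ m ≠ 0 := by simp [hb0, hg1]
  have halt : a ^ l ≠ ∞ := ENNReal.rpow_ne_top_of_nonneg hl.le hf1
  have hbmt : b ^ m ≠ ∞ := ENNReal.rpow_ne_top_of_nonneg hm.le hg1
  have h0 := pl1_norm (f := fun x => a⁻¹ * f x) (g := fun x => b⁻¹ * g x)
    (h := fun x => ((a ^ l)⁻¹ * (b ^ m)⁻¹) * h x) (hf.const_mul _) (hg.const_mul _)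
    (hh.const_mul _) hl hm hlm (by rw [← ENNReal.mul_iSup, ← ha, ENNReal.inv_mul_cancel ha0 hf1])
    (by rw [← ENNReal.mul_iSup, ← hb, ENNReal.inv_mul_cancel hb0 hg1]) (by
      intro x y
      rw [ENNReal.mul_rpow_of_nonneg _ _ hl.le, ENNReal.mul_rpow_of_nonneg _ _ hm.le,
        ENNReal.inv_rpow, ENNReal.inv_rpow, mul_mul_mul_comm]
      gcongr
      exact H x y)
  have h1 := (amgm _ _ hl hm hlm).trans h0
  rw [lintegral_const_mul _ hf, lintegral_const_mul _ hg, lintegral_const_mul _ hh,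
    ENNReal.mul_rpow_of_nonneg _ _ hl.le, ENNReal.mul_rpow_of_nonneg _ _ hm.le,
        ENNReal.inv_rpow, ENNReal.inv_rpow, mul_mul_mul_comm] at h1
  have hc0 : (a ^ l)⁻¹ * (b ^ m)⁻¹ ≠ 0 := by simp [halt, hbmt]
  have hct : (a ^ l)⁻¹ * (b ^ m)⁻¹ ≠ ∞ := 
    ENNReal.mul_ne_top (ENNReal.inv_ne_top.2 hal0) (ENNReal.inv_ne_top.2 hbm0)
  exact (ENNReal.mul_le_mul_iff_right hc0 hct).1 h1

lemma rpow_iSup (a : ℕ → ℝ≥0∞) {l : ℝ} (hl : 0 < l) : (⨆ n, a n) ^ l = ⨆ n, a n ^ l := by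
  exact (ENNReal.orderIsoRpow l hl).map_iSup a

/-- Prékopa–Leindler in dimension one. -/
lemma pl1 {f g h : ℝ → ℝ≥0∞} (hf : Measurable f) (hg : Measurable g) (hh : Measurable h)
    {l m : ℝ} (hl : 0 < l) (hm : 0 < m) (hlm : l + m = 1)
    (H : ∀ x y, f x ^ l * g y ^ m ≤ h (l * x + m * y)) :
    (∫⁻ x, f x) ^ l * (∫⁻ x, g x) ^ m ≤ ∫⁻ x, h x := by
  have key : ∀ f : ℝ → ℝ≥0∞, Measurable f → 
      ∫⁻ x, f x = ⨆ n : ℕ, ∫⁻ x, min (f x) n := by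
    intro f hf
    rw [← lintegral_iSup (fun n => hf.min measurable_const)]
    · congr 1
      ext x
      rw [← inf_iSup_eq, ENNReal.iSup_natCast]
      simp
    · intro i j hij x
      dsimp only
      gcongr
  rw [key f hf, key g hg, rpow_iSup _ hl, rpow_iSup _ hm, ENNReal.iSup_mul]
  refine iSup_le fun i => ?_
  rw [ENNReal.mul_iSup]
  refine iSup_le fun j => ?_
  refine pl1_bdd (hf.min measurable_const) (hg.min measurable_const) hh hl hm hlm ?_ ?_ ?_
  · exact ((iSup_le fun x => min_le_right _ _).trans_lt (ENNReal.natCast_lt_top i)).ne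
  · exact ((iSup_le fun x => min_le_right _ _).trans_lt (ENNReal.natCast_lt_top j)).ne
  · intro x y
    refine le_trans ?_ (H x y)
    gcongr <;> exact min_le_left _ _

lemma lintegral_cons {n : ℕ} {f : (Fin (n + 1) → ℝ) → ℝ≥0∞} (hf : Measurable f) :
    ∫⁻ x, f x = ∫⁻ t : ℝ, ∫⁻ y : Fin n → ℝ, f (Fin.cons t y) := by
  have h := volume_preserving_piFinSuccAbove (fun _ : Fin (n + 1) => ℝ) 0
  rw [(h.symm _).lintegral_map_equiv, Measure.volume_eq_prod, lintegral_prod]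
  · simp [MeasurableEquiv.piFinSuccAbove, Fin.insertNthEquiv]
  · exact (hf.comp (MeasurableEquiv.measurable _)).aemeasurable

lemma measurable_cons {n : ℕ} :
    Measurable fun p : ℝ × (Fin n → ℝ) => (Fin.cons p.1 p.2 : Fin (n + 1) → ℝ) := by
  rw [measurable_pi_iff]
  intro i
  refine Fin.cases ?_ (fun j => ?_) i
  · simpa using measurable_fst
  · simp only [Fin.cons_succ]
    fun_prop

/-- Prékopa–Leindler. -/
lemma pl {n : ℕ} : ∀ {f g h : (Fin n → ℝ) → ℝ≥0∞}, Measurable f → Measurable g → Measurable h →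
    ∀ {l m : ℝ}, 0 < l → 0 < m → l + m = 1 →
    (∀ x y, f x ^ l * g y ^ m ≤ h (l • x + m • y)) →
    (∫⁻ x, f x) ^ l * (∫⁻ x, g x) ^ m ≤ ∫⁻ x, h x := by
  induction n with
  | zero =>
    intro f g h hf hg hh l m hl hm hlm H
    have := H 0 0
    have e : l • (0 : Fin 0 → ℝ) + m • 0 = 0 := Subsingleton.elim _ _
    rw [e] at this
    have v : (volume : Measure (Fin 0 → ℝ)) = Measure.dirac 0 := by
      rw [volume_pi, Measure.pi_of_empty _ 0]
    rw [v, lintegral_dirac, lintegral_dirac, lintegral_dirac]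
    exact this
  | succ n ih =>
    intro f g h hf hg hh l m hl hm hlm H
    rw [lintegral_cons hf, lintegral_cons hg, lintegral_cons hh]
    have hc : ∀ f : (Fin (n+1) → ℝ) → ℝ≥0∞, Measurable f → 
        Measurable fun t : ℝ => ∫⁻ y : Fin n → ℝ, f (Fin.cons t y) := fun f hf =>
      (hf.comp measurable_cons).lintegral_prod_right'
    have hs : ∀ f : (Fin (n+1) → ℝ) → ℝ≥0∞, Measurable f → 
        ∀ t : ℝ, Measurable fun y : Fin n → ℝ => f (Fin.cons t y) := fun f hf t =>
      (hf.comp measurable_cons).comp (measurable_const.prodMk measurable_id)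
    refine pl1 (hc f hf) (hc g hg) (hc h hh) hl hm hlm fun x y => ?_
    refine ih (hs f hf x) (hs g hg y) (hs h hh _) hl hm hlm fun u v => ?_
    refine (H _ _).trans (le_of_eq ?_)
    congr 1
    ext i
    refine Fin.cases ?_ (fun j => ?_) i <;> simp

end Reisner


namespace Reisner

open scoped ENNReal Pointwise

lemma lintegral_even {G : ℝ → ℝ≥0∞} (he : ∀ t, G (-t) = G t) :
    ∫⁻ t, G t = 2 * ∫⁻ t in Set.Ioi 0, G t := by
  rw [← lintegral_add_compl G (measurableSet_Ioi (a := (0:ℝ))), two_mul]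
  congr 1
  rw [Set.compl_Ioi, ← lintegral_indicator measurableSet_Iic,
    ← lintegral_neg_eq_self (Set.indicator (Set.Iic (0:ℝ)) G), ← setLIntegral_congr (Ioi_ae_eq_Ici (a := (0:ℝ))).symm,
    ← lintegral_indicator measurableSet_Ici]
  congr 1
  ext x
  simp [Set.indicator_apply, he]

lemma shift_integral {F : ℝ → ℝ≥0∞} (hF : Measurable F) :
    ∫⁻ s in Set.Ioi (0:ℝ), ∫⁻ t in Set.Ioi (0:ℝ), F (s + t) =
      ∫⁻ r in Set.Ioi (0:ℝ), ENNReal.ofReal r * F r := by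
  have h1 : ∀ s : ℝ, ∫⁻ t in Set.Ioi (0:ℝ), F (s + t) = ∫⁻ r, (Set.Ioi s).indicator F r := by
    intro s
    rw [← lintegral_indicator measurableSet_Ioi, ← lintegral_add_left_eq_self (Set.indicator _ F) s]
    congr 1
    ext t
    simp [Set.indicator_apply]
  simp_rw [h1]
  rw [← lintegral_indicator measurableSet_Ioi, ← lintegral_indicator measurableSet_Ioi]
  have h2 : ∀ s : ℝ, (Set.Ioi (0:ℝ)).indicator (fun s => ∫⁻ r, (Set.Ioi s).indicator F r) s =
      ∫⁻ r, ({p : ℝ × ℝ | 0 < p.1 ∧ p.1 < p.2}).indicator (fun p => F p.2) (s, r) := by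
    intro s
    by_cases hs : 0 < s
    · rw [Set.indicator_of_mem (by simpa using hs)]
      congr 1
      ext r
      simp [Set.indicator_apply, hs]
    · rw [Set.indicator_of_notMem (by simpa using hs)]
      simp [Set.indicator_apply, hs]
  simp_rw [h2]
  have hm : MeasurableSet {p : ℝ × ℝ | 0 < p.1 ∧ p.1 < p.2} :=
    (measurableSet_lt measurable_const measurable_fst).inter
      (measurableSet_lt measurable_fst measurable_snd)
  rw [lintegral_lintegral_swap]
  · congr 1
    ext r
    have : ∀ s : ℝ, ({p : ℝ × ℝ | 0 < p.1 ∧ p.1 < p.2}).indicator (fun p => F p.2) (s, r) =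
        (Set.Ioo 0 r).indicator (fun _ => F r) s := by
      intro s; simp [Set.indicator_apply]
    simp_rw [this]
    rw [lintegral_indicator_const measurableSet_Ioo, Real.volume_Ioo, sub_zero]
    by_cases hr : 0 < r
    · simp [Set.indicator_apply, hr, mul_comm]
    · simp [Set.indicator_apply, hr, ENNReal.ofReal_of_nonpos (not_lt.1 hr)]
  · exact ((hF.comp measurable_snd).indicator hm).aemeasurable

lemma oned {F : ℝ → ℝ≥0∞} (hF : Measurable F) (he : ∀ t, F (-t) = F t)
    (hsub : ∀ s t, 0 < s → 0 < t → F (s + t) * F 0 ≤ F s * F t) :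
    2 * ((∫⁻ t, ENNReal.ofReal |t| * F t) * F 0) ≤ (∫⁻ t, F t) ^ 2 := by
  rw [lintegral_even he, lintegral_even (G := fun t => ENNReal.ofReal |t| * F t) (by simp [he])]
  have h1 : ∫⁻ t in Set.Ioi (0:ℝ), ENNReal.ofReal |t| * F t =
      ∫⁻ t in Set.Ioi (0:ℝ), ENNReal.ofReal t * F t :=
    setLIntegral_congr_fun measurableSet_Ioi fun t ht => by
      rw [abs_of_pos (show (0:ℝ) < t from ht)]
  have h2 : (∫⁻ t in Set.Ioi (0:ℝ), ENNReal.ofReal t * F t) * F 0 ≤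
      (∫⁻ t in Set.Ioi (0:ℝ), F t) ^ 2 := by
    have hm : Measurable fun p : ℝ × ℝ => F (p.1 + p.2) := hF.comp (by fun_prop)
    rw [← shift_integral hF, ← lintegral_mul_const _ hm.lintegral_prod_right', pow_two,
      ← lintegral_mul_const _ hF]
    refine setLIntegral_mono' measurableSet_Ioi fun s hs => ?_
    have hms : Measurable fun t => F (s + t) := hF.comp (by fun_prop)
    dsimp only
    rw [← lintegral_mul_const _ hms, ← lintegral_const_mul _ hF]
    exact setLIntegral_mono' measurableSet_Ioi fun t ht => hsub s t hs ht
  rw [h1, mul_pow, mul_assoc 2, ← mul_assoc, ← pow_two]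
  gcongr

/-- marginal of `exp (-H)` -/
noncomputable def marg {n : ℕ} (H : (Fin (n + 1) → ℝ) → ℝ) (t : ℝ) : ℝ≥0∞ :=
  ∫⁻ y : Fin n → ℝ, ENNReal.ofReal (Real.exp (-H (Fin.cons t y)))

lemma marg_pl {n : ℕ} {H : (Fin (n + 1) → ℝ) → ℝ} (hm : Measurable H)
    (hc : ConvexOn ℝ Set.univ H) {l m : ℝ} (hl : 0 < l) (hm' : 0 < m) (hlm : l + m = 1) (a b : ℝ) :
    marg H a ^ l * marg H b ^ m ≤ marg H (l * a + m * b) := by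
  have hs : ∀ t : ℝ, Measurable fun y : Fin n → ℝ =>
      ENNReal.ofReal (Real.exp (-H (Fin.cons t y))) := fun t =>
    ENNReal.measurable_ofReal.comp (Real.measurable_exp.comp
      ((hm.comp (measurable_cons.comp (measurable_const.prodMk measurable_id))).neg))
  refine pl (hs a) (hs b) (hs _) hl hm' hlm fun x y => ?_
  have e : (Fin.cons (l * a + m * b) (l • x + m • y) : Fin (n + 1) → ℝ) =
      l • Fin.cons a x + m • Fin.cons b y := by
    ext i
    refine Fin.cases ?_ (fun j => ?_) i <;> simp
  have h := hc.2 (Set.mem_univ (Fin.cons a x)) (Set.mem_univ (Fin.cons b y)) hl.le hm'.le hlm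
  rw [e, ENNReal.ofReal_rpow_of_pos (Real.exp_pos _), ENNReal.ofReal_rpow_of_pos (Real.exp_pos _),
    ← ENNReal.ofReal_mul (by positivity), ← Real.exp_mul, ← Real.exp_mul, ← Real.exp_add]
  apply ENNReal.ofReal_le_ofReal
  apply Real.exp_le_exp.2
  simp only [smul_eq_mul] at h
  linarith

lemma marg_ineq {n : ℕ} {H : (Fin (n + 1) → ℝ) → ℝ} (hm : Measurable H)
    (hc : ConvexOn ℝ Set.univ H) (he : ∀ x, H (-x) = H x) :
    2 * ((∫⁻ x : Fin (n + 1) → ℝ, ENNReal.ofReal |x 0| * ENNReal.ofReal (Real.exp (-H x))) *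
      marg H 0) ≤ (∫⁻ x, ENNReal.ofReal (Real.exp (-H x))) ^ 2 := by
  have hme : Measurable fun x => ENNReal.ofReal (Real.exp (-H x)) := by fun_prop
  rw [lintegral_cons hme, lintegral_cons (by fun_prop)]
  have h1 : ∀ t : ℝ, ∫⁻ y : Fin n → ℝ, ENNReal.ofReal |(Fin.cons t y : Fin (n + 1) → ℝ) 0| *
      ENNReal.ofReal (Real.exp (-H (Fin.cons t y))) = ENNReal.ofReal |t| * marg H t := by
    intro t
    simp only [Fin.cons_zero]
    rw [lintegral_const_mul']
    · rfl
    · simp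
  simp_rw [h1]
  refine oned (F := marg H) ?_ ?_ ?_
  · exact (hme.comp measurable_cons).lintegral_prod_right'
  · intro t
    unfold marg
    rw [← lintegral_neg_eq_self]
    congr 1
    ext y
    have : (Fin.cons (-t) (-y) : Fin (n + 1) → ℝ) = -Fin.cons t y := by
      ext i
      refine Fin.cases ?_ (fun j => ?_) i <;> simp
    rw [this, he]
  · intro s t hs ht
    have hst : 0 < s + t := by linarith
    have hsum : s / (s + t) + t / (s + t) = 1 := by field_simp
    have h2 := marg_pl hm hc (div_pos hs hst) (div_pos ht hst) hsum (s + t) 0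
    have h3 := marg_pl hm hc (div_pos ht hst) (div_pos hs hst) (by rw [add_comm]; exact hsum)
      (s + t) 0
    rw [mul_zero, add_zero, div_mul_cancel₀ _ hst.ne'] at h2 h3
    calc marg H (s + t) * marg H 0
        = (marg H (s + t) ^ (s / (s + t)) * marg H (s + t) ^ (t / (s + t))) *
          (marg H 0 ^ (t / (s + t)) * marg H 0 ^ (s / (s + t))) := by
          rw [← ENNReal.rpow_add_of_nonneg _ _ (by positivity) (by positivity), 
            ← ENNReal.rpow_add_of_nonneg _ _ (by positivity) (by positivity), hsum,
            add_comm (t / (s + t)), hsum,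
            ENNReal.rpow_one, ENNReal.rpow_one]
      _ = _ := by rw [mul_mul_mul_comm]
      _ ≤ _ := mul_le_mul' h2 h3

end Reisner


namespace Reisner

open scoped ENNReal Pointwise Matrix

variable {Ω : Type*} [MeasurableSpace Ω]

noncomputable def hv {n : ℕ} (μ : Measure Ω) (v : Ω → Fin n → ℝ) (x : Fin n → ℝ) : ℝ :=
  (1 / 2) * ∫ ω, |x ⬝ᵥ v ω| ∂μ

lemma integrable_dot {n : ℕ} {μ : Measure Ω} {v : Ω → Fin n → ℝ} (hv : Integrable v μ)
    (x : Fin n → ℝ) : Integrable (fun ω => x ⬝ᵥ v ω) μ := by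
  unfold dotProduct
  exact integrable_finsetSum _ fun i _ => (hv.eval i).const_mul _

lemma hv_nonneg {n : ℕ} (μ : Measure Ω) (v : Ω → Fin n → ℝ) (x : Fin n → ℝ) : 0 ≤ hv μ v x := by
  unfold hv
  have : 0 ≤ ∫ ω, |x ⬝ᵥ v ω| ∂μ := integral_nonneg fun ω => abs_nonneg _
  positivity

lemma hv_smul {n : ℕ} (μ : Measure Ω) (v : Ω → Fin n → ℝ) (r : ℝ) (x : Fin n → ℝ) :
    hv μ v (r • x) = |r| * hv μ v x := by
  unfold hv
  simp only [smul_dotProduct, smul_eq_mul, abs_mul, integral_const_mul]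
  ring

lemma hv_neg {n : ℕ} (μ : Measure Ω) (v : Ω → Fin n → ℝ) (x : Fin n → ℝ) :
    hv μ v (-x) = hv μ v x := by
  unfold hv
  simp

lemma hv_zero {n : ℕ} (μ : Measure Ω) (v : Ω → Fin n → ℝ) :
    hv μ v 0 = 0 := by
  unfold hv
  simp

lemma hv_add {n : ℕ} {μ : Measure Ω} {v : Ω → Fin n → ℝ} (h : Integrable v μ) (x y : Fin n → ℝ) :
    hv μ v (x + y) ≤ hv μ v x + hv μ v y := by
  unfold hv
  rw [← mul_add, ← integral_add (integrable_dot h x).abs (integrable_dot h y).abs]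
  gcongr
  · exact (integrable_dot h _).abs
  · exact (integrable_dot h x).abs.add (integrable_dot h y).abs
  · intro ω
    simp only [add_dotProduct]
    exact abs_add_le _ _

lemma hv_convex {n : ℕ} {μ : Measure Ω} {v : Ω → Fin n → ℝ} (h : Integrable v μ) :
    ConvexOn ℝ Set.univ (hv μ v) := by
  refine ⟨convex_univ, fun x _ y _ a b ha hb hab => ?_⟩
  refine (hv_add h _ _).trans ?_
  rw [hv_smul, hv_smul, abs_of_nonneg ha, abs_of_nonneg hb]
  rfl

lemma hv_continuous {n : ℕ} {μ : Measure Ω} {v : Ω → Fin n → ℝ} (h : Integrable v μ) :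
    Continuous (hv μ v) := by
  rw [← continuousOn_univ]
  exact (hv_convex h).continuousOn isOpen_univ

noncomputable def J {n : ℕ} (μ : Measure Ω) (v : Ω → Fin n → ℝ) : ℝ≥0∞ :=
  ∫⁻ x, ENNReal.ofReal (Real.exp (-hv μ v x))

noncomputable def D {n : ℕ} (μ : Measure Ω) (v : Ω → Fin n → ℝ) : ℝ≥0∞ :=
  ∫⁻ ω : Fin n → Ω, ENNReal.ofReal |(Matrix.of fun i => v (ω i)).det| ∂Measure.pi (fun _ => μ)

lemma J_facts {n : ℕ} {μ : Measure Ω} {v : Ω → Fin n → ℝ} (h : Integrable v μ)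
    (hpos : ∀ x, x ≠ 0 → 0 < hv μ v x) :
    J μ v = (n.factorial : ℝ≥0∞) * volume {x | hv μ v x < 1} ∧ J μ v ≠ ∞ ∧ J μ v ≠ 0 := by
  have h1 := measure_lt_one_eq_integral_div_gamma (volume : Measure (Fin n → ℝ)) (g := hv μ v)
    (hv_zero μ v) (hv_neg μ v) (hv_add h) (fun {x} hx => by
      by_contra hne
      exact (hpos x hne).ne' hx) (fun r x => (hv_smul μ v r x).le) (p := 1) one_pos
  simp only [Real.rpow_one, Module.finrank_fintype_fun_eq_card, Fintype.card_fin, div_one,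
    Real.Gamma_nat_eq_factorial] at h1
  have hvp : 0 < volume {x | hv μ v x < 1} := by
    refine IsOpen.measure_pos _ (isOpen_lt (hv_continuous h) continuous_const) ⟨0, ?_⟩
    simp [hv_zero]
  have h_integ : Integrable (fun x => Real.exp (-hv μ v x)) := by
    by_contra hni
    rw [integral_undef hni] at h1
    simp [h1] at hvp
  have hJ : J μ v = ENNReal.ofReal (∫ x, Real.exp (-hv μ v x)) := by
    rw [ofReal_integral_eq_lintegral_ofReal h_integ
      (Filter.Eventually.of_forall fun x => (Real.exp_pos _).le)]
    rfl
  have hfac : (0 : ℝ) < n.factorial := by exact_mod_cast n.factorial_pos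
  have hJ2 : J μ v = (n.factorial : ℝ≥0∞) * volume {x | hv μ v x < 1} := by
    rw [h1, hJ, ENNReal.ofReal_div_of_pos hfac, ENNReal.ofReal_natCast, ENNReal.mul_div_cancel]
    · exact_mod_cast hfac.ne'
    · simp
  refine ⟨hJ2, by simp [hJ], ?_⟩
  rw [hJ2]
  simp only [ne_eq, mul_eq_zero, not_or]
  exact ⟨by exact_mod_cast n.factorial_pos.ne', hvp.ne'⟩

lemma cov {n : ℕ} (M : Matrix (Fin n) (Fin n) ℝ) (hM : M.det ≠ 0) {f : (Fin n → ℝ) → ℝ≥0∞}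
    (hf : Measurable f) :
    ∫⁻ x, f x = ENNReal.ofReal |M.det| * ∫⁻ x, f (x ᵥ* M) := by
  have h := Real.map_matrix_volume_pi_eq_smul_volume_pi (M := Mᵀ) (by rwa [Matrix.det_transpose])
  have h2 : ∫⁻ x, f (x ᵥ* M) = ∫⁻ x, f x ∂(Measure.map (Matrix.toLin' Mᵀ) volume) := by
    rw [lintegral_map hf]
    · simp [Matrix.mulVec_transpose]
    · exact (LinearMap.continuous_of_finiteDimensional _).measurable
  rw [h2, h, lintegral_smul_measure, smul_eq_mul, ← mul_assoc, ← ENNReal.ofReal_mul (abs_nonneg _),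
    ← abs_mul, Matrix.det_transpose, mul_inv_cancel₀ hM]
  simp

lemma euler {n : ℕ} {μ : Measure Ω} {v : Ω → Fin n → ℝ} (h : Integrable v μ)
    (hpos : ∀ x, x ≠ 0 → 0 < hv μ v x) :
    (n : ℝ≥0∞) * J μ v ≤
      ∫⁻ x, ENNReal.ofReal (hv μ v x) * ENNReal.ofReal (Real.exp (-hv μ v x)) := by
  obtain ⟨-, hJt, hJ0⟩ := J_facts h hpos
  have hmh : Measurable (hv μ v) := (hv_continuous h).measurable
  set K := ∫⁻ x, ENNReal.ofReal (hv μ v x) * ENNReal.ofReal (Real.exp (-hv μ v x)) with hK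
  by_cases hKt : K = ∞
  · simp [hKt]
  have hscale : ∀ s : ℝ, 0 < s → J μ v = ENNReal.ofReal (s ^ n) *
      ∫⁻ x, ENNReal.ofReal (Real.exp (-(s * hv μ v x))) := by
    intro s hs
    unfold J
    rw [cov (s • (1 : Matrix (Fin n) (Fin n) ℝ)) (by simp [hs.ne']) (by fun_prop)]
    simp [Matrix.det_smul, Matrix.vecMul_smul, hv_smul, abs_of_pos hs]
  have h1 : ∀ s : ℝ, 1 < s → (n : ℝ) * (J μ v).toReal ≤ s ^ n * K.toReal := by
    intro s hs
    have hs0 : 0 < s := by linarith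
    have h2 : J μ v ≤ (∫⁻ x, ENNReal.ofReal (Real.exp (-(s * hv μ v x)))) +
        ENNReal.ofReal (s - 1) * K := by
      rw [hK, ← lintegral_const_mul _ (by fun_prop), ← lintegral_add_left (by fun_prop)]
      refine lintegral_mono fun x => ?_
      rw [← ENNReal.ofReal_mul (hv_nonneg _ _ _), ← ENNReal.ofReal_mul (by linarith),
        ← ENNReal.ofReal_add (Real.exp_pos _).le (by
          have := hv_nonneg μ v x
          have : 0 ≤ s - 1 := by linarith
          positivity)]
      apply ENNReal.ofReal_le_ofReal
      have h3 := Real.add_one_le_exp (-((s - 1) * hv μ v x))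
      have h4 : Real.exp (-(s * hv μ v x)) =
          Real.exp (-hv μ v x) * Real.exp (-((s - 1) * hv μ v x)) := by
        rw [← Real.exp_add]; ring_nf
      rw [h4]
      have := Real.exp_pos (-hv μ v x)
      nlinarith
    have h5 : ENNReal.ofReal (s ^ n) * J μ v ≤ J μ v +
        ENNReal.ofReal (s ^ n) * (ENNReal.ofReal (s - 1) * K) := by
      conv_rhs => rw [hscale s hs0]
      rw [← mul_add]
      gcongr
    have h6 := ENNReal.toReal_mono (by finiteness) h5
    rw [ENNReal.toReal_add hJt (by finiteness), ENNReal.toReal_mul, ENNReal.toReal_mul,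
      ENNReal.toReal_mul, ENNReal.toReal_ofReal (by positivity),
      ENNReal.toReal_ofReal (by linarith)] at h6
    have h7 : 1 + (n : ℝ) * (s - 1) ≤ s ^ n := by
      have := one_add_mul_le_pow (a := s - 1) (by linarith) n
      simpa using this
    have hJr : 0 ≤ (J μ v).toReal := ENNReal.toReal_nonneg
    have h8 : (s - 1) * (n * (J μ v).toReal) ≤ (s - 1) * (s ^ n * K.toReal) := by
      nlinarith
    exact le_of_mul_le_mul_left h8 (by linarith)
  have h2 : (n : ℝ) * (J μ v).toReal ≤ K.toReal := by
    have ht : Filter.Tendsto (fun s : ℝ => s ^ n * K.toReal) (nhdsWithin 1 (Set.Ioi 1))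
        (nhds ((1:ℝ) ^ n * K.toReal)) :=
      (Continuous.tendsto (by fun_prop) 1).mono_left nhdsWithin_le_nhds
    rw [one_pow, one_mul] at ht
    exact ge_of_tendsto ht (Filter.eventually_of_mem self_mem_nhdsWithin h1)
  rw [← ENNReal.ofReal_toReal hJt, ← ENNReal.ofReal_toReal hKt, ← ENNReal.ofReal_natCast,
    ← ENNReal.ofReal_mul (by positivity)]
  exact ENNReal.ofReal_le_ofReal h2

lemma lintegral_pi_cons {n : ℕ} {μ : Measure Ω} [SigmaFinite μ] {f : (Fin (n + 1) → Ω) → ℝ≥0∞}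
    (hf : Measurable f) :
    ∫⁻ x, f x ∂(Measure.pi fun _ => μ) =
      ∫⁻ t, ∫⁻ y : Fin n → Ω, f (Fin.cons t y) ∂(Measure.pi fun _ => μ) ∂μ := by
  have h := measurePreserving_piFinSuccAbove (fun _ : Fin (n + 1) => μ) 0
  rw [(h.symm _).lintegral_map_equiv, lintegral_prod]
  · simp [MeasurableEquiv.piFinSuccAbove, Fin.insertNthEquiv]
  · exact (hf.comp (MeasurableEquiv.measurable _)).aemeasurable

lemma measurable_det_of {n : ℕ} {α : Type*} [MeasurableSpace α] {A : α → Fin n → Fin n → ℝ}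
    (hA : Measurable A) : Measurable fun a => (Matrix.of (A a)).det := by
  simp only [Matrix.det_apply, Matrix.of_apply]
  fun_prop

lemma hv_vecMul {n : ℕ} (μ : Measure Ω) (v : Ω → Fin n → ℝ) (M : Matrix (Fin n) (Fin n) ℝ)
    (x : Fin n → ℝ) : hv μ v (x ᵥ* M) = hv μ (fun ω => M *ᵥ v ω) x := by
  unfold hv
  simp [Matrix.dotProduct_mulVec]

lemma hv_cons_zero {n : ℕ} (μ : Measure Ω) (v : Ω → Fin (n + 1) → ℝ) (y : Fin n → ℝ) :
    hv μ v (Fin.cons 0 y) = hv μ (fun ω i => v ω (Fin.succ i)) y := by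
  unfold hv
  simp [dotProduct, Fin.sum_univ_succ]

lemma det_cons_single {n : ℕ} (A : Fin n → Fin (n + 1) → ℝ) :
    (Matrix.of (Fin.cons (Pi.single 0 1) A : Fin (n + 1) → Fin (n + 1) → ℝ)).det =
      (Matrix.of fun i j => A i (Fin.succ j)).det := by
  rw [Matrix.det_succ_row_zero, Fin.sum_univ_succ]
  simp [Pi.single_apply]
  congr 1

end Reisner


namespace Reisner

open scoped ENNReal Pointwise Matrix

variable {Ω : Type*} [MeasurableSpace Ω]

lemma integrable_mulVec {n k : ℕ} {μ : Measure Ω} {v : Ω → Fin n → ℝ} (h : Integrable v μ)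
    (M : Matrix (Fin k) (Fin n) ℝ) : Integrable (fun ω => M *ᵥ v ω) μ := by
  refine Integrable.of_eval ?_
  intro i
  exact integrable_dot h (M i)

lemma slice {n : ℕ} {μ : Measure Ω}
    (ih : ∀ v : Ω → Fin n → ℝ, Measurable v → Integrable v μ → (∀ x, x ≠ 0 → 0 < hv μ v x) →
      (4 ^ n * n.factorial : ℝ≥0∞) ≤ J μ v * D μ v)
    {v : Ω → Fin (n + 1) → ℝ} (hm : Measurable v) (h : Integrable v μ)
    (hpos : ∀ x, x ≠ 0 → 0 < hv μ v x) (u : Fin (n + 1) → ℝ) :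
    (4 ^ n * n.factorial : ℝ≥0∞) *
      (2 * ∫⁻ x, ENNReal.ofReal |x ⬝ᵥ u| * ENNReal.ofReal (Real.exp (-hv μ v x))) ≤
    J μ v ^ 2 * ∫⁻ ω : Fin n → Ω, ENNReal.ofReal
      |(Matrix.of (Fin.cons u (fun i => v (ω i)) : Fin (n + 1) → Fin (n + 1) → ℝ)).det|
        ∂Measure.pi (fun _ => μ) := by
  by_cases hu : u = 0
  · simp [hu]
  obtain ⟨A, hA⟩ := SeparatingDual.exists_continuousLinearEquiv_apply_eq (R := ℝ)
    (x := u) (y := Pi.single 0 1) hu (by simp)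
  set M := LinearMap.toMatrix' (A.toLinearEquiv : (Fin (n + 1) → ℝ) →ₗ[ℝ] (Fin (n + 1) → ℝ)) with hMdef
  have hMA : ∀ x, M *ᵥ x = A x := by
    intro x
    rw [hMdef, LinearMap.toMatrix'_mulVec]
    rfl
  have hdet : M.det ≠ 0 := by
    rw [hMdef, LinearMap.det_toMatrix']
    exact (LinearEquiv.isUnit_det' A.toLinearEquiv).ne_zero
  have hmh : Measurable (hv μ v) := (hv_continuous h).measurable
  set v' : Ω → Fin (n + 1) → ℝ := fun ω => M *ᵥ v ω with hv'
  have hv'i : Integrable v' μ := integrable_mulVec h M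
  set w : Ω → Fin n → ℝ := fun ω i => v' ω (Fin.succ i) with hw
  have hv'm : Measurable v' := by
    have : Continuous fun x : Fin (n + 1) → ℝ => M *ᵥ x := by fun_prop
    exact this.measurable.comp hm
  have hwm : Measurable w := by
    rw [hw]; fun_prop
  have hwi : Integrable w μ := by
    refine Integrable.of_eval ?_
    intro i
    exact hv'i.eval (Fin.succ i)
  have hwpos : ∀ y, y ≠ 0 → 0 < hv μ w y := by
    intro y hy
    rw [hw, ← hv_cons_zero, hv', ← hv_vecMul]
    apply hpos
    intro h0
    have h1 : (Fin.cons 0 y : Fin (n + 1) → ℝ) = 0 := by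
      by_contra hne
      exact hne (Matrix.eq_zero_of_vecMul_eq_zero hdet h0)
    apply hy
    ext i
    simpa using congrFun h1 (Fin.succ i)
  have hI := ih w hwm hwi hwpos
  have hF0 : marg (hv μ v') 0 = J μ w := by
    unfold marg J
    simp_rw [hv_cons_zero]
    rfl
  have hD : D μ w = ENNReal.ofReal |M.det| * ∫⁻ ω : Fin n → Ω, ENNReal.ofReal
      |(Matrix.of (Fin.cons u (fun i => v (ω i)) : Fin (n + 1) → Fin (n + 1) → ℝ)).det|
        ∂Measure.pi (fun _ => μ) := by
    unfold D
    rw [← lintegral_const_mul']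
    · congr 1
      ext ω
      rw [← ENNReal.ofReal_mul (abs_nonneg _), ← abs_mul, mul_comm, ← Matrix.det_transpose M,
        ← Matrix.det_mul]
      have : (Matrix.of (Fin.cons u (fun i => v (ω i)) : Fin (n + 1) → Fin (n + 1) → ℝ)) * Mᵀ =
          Matrix.of (Fin.cons (Pi.single 0 1) (fun i => v' (ω i)) :
            Fin (n + 1) → Fin (n + 1) → ℝ) := by
        ext i j
        refine Fin.cases ?_ (fun i => ?_) i
        · rw [← hA, ← hMA]
          simp [Matrix.mul_apply, Matrix.mulVec, dotProduct, mul_comm]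
        · simp [Matrix.mul_apply, hv', Matrix.mulVec, dotProduct, mul_comm]
      rw [this, det_cons_single]
    · simp
  have hJ : J μ v = ENNReal.ofReal |M.det| * ∫⁻ x, ENNReal.ofReal (Real.exp (-hv μ v' x)) := by
    unfold J
    rw [cov M hdet (by fun_prop)]
    simp_rw [hv_vecMul]
    rfl
  have hX : ∫⁻ x, ENNReal.ofReal |x ⬝ᵥ u| * ENNReal.ofReal (Real.exp (-hv μ v x)) =
      ENNReal.ofReal |M.det| *
        ∫⁻ x, ENNReal.ofReal |x 0| * ENNReal.ofReal (Real.exp (-hv μ v' x)) := by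
    rw [cov M hdet]
    · simp_rw [hv_vecMul, ← Matrix.dotProduct_mulVec, hMA, hA]
      simp [hv', hMA]
    · have : Measurable fun x : Fin (n + 1) → ℝ => x ⬝ᵥ u := by
        unfold dotProduct; fun_prop
      fun_prop
  have hmain := marg_ineq (hv_continuous hv'i).measurable (hv_convex hv'i) (hv_neg μ v')
  rw [hF0] at hmain
  rw [hX, hJ]
  rw [hD] at hI
  calc _ ≤ _ := mul_le_mul_left hI _
    _ = (2 * ((∫⁻ x, ENNReal.ofReal |x 0| * ENNReal.ofReal (Real.exp (-hv μ v' x))) * J μ w)) *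
        (ENNReal.ofReal |M.det| ^ 2 * ∫⁻ ω : Fin n → Ω, ENNReal.ofReal
      |(Matrix.of (Fin.cons u (fun i => v (ω i)) : Fin (n + 1) → Fin (n + 1) → ℝ)).det|
        ∂Measure.pi (fun _ => μ)) := by ring
    _ ≤ _ := mul_le_mul_left hmain _
    _ = _ := by ring

theorem thmA {μ : Measure Ω} [SigmaFinite μ] (n : ℕ) : ∀ v : Ω → Fin n → ℝ, Measurable v →
    Integrable v μ → (∀ x, x ≠ 0 → 0 < hv μ v x) →
      (4 ^ n * n.factorial : ℝ≥0∞) ≤ J μ v * D μ v := by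
  induction n with
  | zero =>
    intro v hm h hpos
    have e : (fun _ : Fin 0 → ℝ => ENNReal.ofReal (Real.exp (-hv μ v 0))) =
      (fun x => ENNReal.ofReal (Real.exp (-hv μ v x))) := by
      ext x; rw [Subsingleton.elim x 0]
    have e1 : J μ v = 1 := by
      unfold J
      rw [← e, volume_pi, Measure.pi_of_empty _ 0]
      simp only [hv_zero]
      simp
    have e2 : D μ v = 1 := by
      unfold D
      rw [Measure.pi_of_empty _ Fin.elim0]
      simp
    simp [e1, e2]
  | succ n ih =>
    intro v hm h hpos
    obtain ⟨-, hJt, hJ0⟩ := J_facts h hpos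
    have hmh : Measurable (hv μ v) := (hv_continuous h).measurable
    have hdetm : Measurable fun ω : Fin (n + 1) → Ω =>
        ENNReal.ofReal |(Matrix.of fun i => v (ω i)).det| := by
      have := measurable_det_of (A := fun (ω : Fin (n + 1) → Ω) i => v (ω i)) (by fun_prop)
      fun_prop
    have hD : D μ v = ∫⁻ t, ∫⁻ ω : Fin n → Ω, ENNReal.ofReal
      |(Matrix.of (Fin.cons (v t) (fun i => v (ω i)) : Fin (n + 1) → Fin (n + 1) → ℝ)).det|
        ∂Measure.pi (fun _ => μ) ∂μ := by
      unfold D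
      rw [lintegral_pi_cons hdetm]
      congr 1; ext t
      congr 1; ext ω
      congr 4; ext i j
      refine Fin.cases ?_ (fun i => ?_) i <;> simp
    have hdot : Measurable fun p : (Fin (n + 1) → ℝ) × Ω => p.1 ⬝ᵥ v p.2 := by
      unfold dotProduct; fun_prop
    have hK : 2 * ∫⁻ x, ENNReal.ofReal (hv μ v x) * ENNReal.ofReal (Real.exp (-hv μ v x)) =
        ∫⁻ t, (∫⁻ x, ENNReal.ofReal |x ⬝ᵥ v t| * ENNReal.ofReal (Real.exp (-hv μ v x))) ∂μ := by
      rw [lintegral_lintegral_swap, ← lintegral_const_mul _ (by fun_prop)]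
      · congr 1; ext x
        rw [lintegral_mul_const', ← mul_assoc,
          ← ofReal_integral_eq_lintegral_ofReal (integrable_dot h x).abs
            (Filter.Eventually.of_forall fun x => abs_nonneg _)]
        · congr 1
          have : (∫ ω, |x ⬝ᵥ v ω| ∂μ) = 2 * hv μ v x := by unfold hv; ring
          rw [this, ENNReal.ofReal_mul (by norm_num)]
          simp
        · simp
      · have := hdot.comp measurable_swap
        simp only [Function.comp_def, Prod.fst_swap, Prod.snd_swap] at this
        refine Measurable.aemeasurable ?_
        simp only [Function.uncurry_def]
        fun_prop
    have hfin : (4 ^ n * n.factorial : ℝ≥0∞) ≠ ∞ := by finiteness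
    have h1 : (4 ^ n * n.factorial : ℝ≥0∞) * ∫⁻ t, (2 * ∫⁻ x, ENNReal.ofReal |x ⬝ᵥ v t| *
        ENNReal.ofReal (Real.exp (-hv μ v x))) ∂μ ≤ J μ v ^ 2 * D μ v := by
      rw [hD, ← lintegral_const_mul' _ _ hfin, ← lintegral_const_mul' _ _ (by finiteness)]
      exact lintegral_mono fun t => slice ih hm h hpos (v t)
    rw [lintegral_const_mul' _ _ (by simp), ← hK] at h1
    have h2 := euler h hpos
    have h3 : J μ v * (4 ^ (n + 1) * (n + 1).factorial) ≤ J μ v * (J μ v * D μ v) := by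
      calc _ = (4 ^ n * n.factorial : ℝ≥0∞) * (2 * (2 * ((n + 1 : ℕ) * J μ v))) := by
            rw [Nat.factorial_succ]; push_cast; ring
        _ ≤ _ := by gcongr
        _ ≤ _ := h1
        _ = _ := by ring
    exact (ENNReal.mul_le_mul_iff_right hJ0 hJt).1 h3

end Reisner


namespace Reisner

open scoped ENNReal Pointwise Matrix

variable {Ω : Type*} [MeasurableSpace Ω]

lemma integral_perm {n : ℕ} {μ : Measure Ω} [SigmaFinite μ] (τ : Equiv.Perm (Fin n))
    (Φ : (Fin n → Ω) → ℝ) :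
    ∫ ω, Φ (fun i => ω (τ i)) ∂(Measure.pi fun _ => μ) = ∫ ω, Φ ω ∂(Measure.pi fun _ => μ) := by
  have h := measurePreserving_piCongrLeft (fun _ : Fin n => μ) τ.symm
  rw [← h.integral_comp' Φ]
  congr 1
  ext ω
  congr 1
  ext i
  have := Equiv.piCongrLeft_apply_apply (fun _ : Fin n => Ω) τ.symm ω (τ i)
  simp only [Equiv.symm_apply_apply] at this
  exact this.symm

lemma cauchy_binet {n : ℕ} {μ : Measure Ω} [SigmaFinite μ] (a : Ω → ℝ) (c : Ω → Fin n → ℝ)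
    (h_integ : ∀ i j, Integrable (fun ω => a ω * (c ω i * c ω j)) μ) :
    (n.factorial : ℝ) * (Matrix.of fun i j => ∫ ω, a ω * (c ω i * c ω j) ∂μ).det =
      ∫ ω : Fin n → Ω, (∏ i, a (ω i)) * (Matrix.of fun i => c (ω i)).det ^ 2
        ∂(Measure.pi fun _ => μ) ∧
    Integrable (fun ω : Fin n → Ω => (∏ i, a (ω i)) * (Matrix.of fun i => c (ω i)).det ^ 2)
        (Measure.pi fun _ => μ) := by
  set Φ : (Fin n → Ω) → ℝ := fun ω =>
    (∏ i, a (ω i)) * (∏ i, c (ω i) i) * (Matrix.of fun i => c (ω i)).det with hΦ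
  have hΦs : ∀ ω, Φ ω = ∑ σ : Equiv.Perm (Fin n), ((Equiv.Perm.sign σ : ℤ) : ℝ) *
      ∏ i, (a (ω i) * (c (ω i) (σ i) * c (ω i) i)) := by
    intro ω
    rw [hΦ]
    dsimp only
    rw [← Matrix.det_transpose, Matrix.det_apply', Finset.mul_sum]
    refine Finset.sum_congr rfl fun σ _ => ?_
    simp only [Finset.prod_mul_distrib, Matrix.transpose_apply, Matrix.of_apply]
    ring
  have hterm : ∀ σ : Equiv.Perm (Fin n), Integrable (fun ω : Fin n → Ω =>
      ((Equiv.Perm.sign σ : ℤ) : ℝ) * ∏ i, (a (ω i) * (c (ω i) (σ i) * c (ω i) i)))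
      (Measure.pi fun _ => μ) := fun σ =>
    (Integrable.fintype_prod (f := fun i ω => a ω * (c ω (σ i) * c ω i))
      (fun i => h_integ (σ i) i)).const_mul _
  have hΦi : Integrable Φ (Measure.pi fun _ => μ) := by
    have : Φ = fun ω => ∑ σ : Equiv.Perm (Fin n), ((Equiv.Perm.sign σ : ℤ) : ℝ) *
      ∏ i, (a (ω i) * (c (ω i) (σ i) * c (ω i) i)) := funext hΦs
    rw [this]
    exact integrable_finsetSum _ fun σ _ => hterm σ
  have hdet : (Matrix.of fun i j => ∫ ω, a ω * (c ω i * c ω j) ∂μ).det =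
      ∫ ω, Φ ω ∂(Measure.pi fun _ => μ) := by
    simp_rw [hΦs]
    rw [integral_finsetSum _ fun σ _ => hterm σ, Matrix.det_apply']
    refine Finset.sum_congr rfl fun σ _ => ?_
    rw [integral_const_mul, integral_fintype_prod_eq_prod
      (f := fun i ω => a ω * (c ω (σ i) * c ω i))]
    rfl
  have hsym : ∀ ω : Fin n → Ω, ∑ τ : Equiv.Perm (Fin n), Φ (fun i => ω (τ i)) =
      (∏ i, a (ω i)) * (Matrix.of fun i => c (ω i)).det ^ 2 := by
    intro ω
    have h1 : ∀ τ : Equiv.Perm (Fin n), Φ (fun i => ω (τ i)) =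
        (∏ i, a (ω i)) * (Matrix.of fun i => c (ω i)).det *
          (((Equiv.Perm.sign τ : ℤ) : ℝ) * ∏ i, (Matrix.of fun i => c (ω i)) (τ i) i) := by
      intro τ
      rw [hΦ]
      dsimp only
      rw [Equiv.prod_comp τ (fun i => a (ω i))]
      have : (Matrix.of fun i => c (ω (τ i))) = (Matrix.of fun i => c (ω i)).submatrix τ id := rfl
      rw [this, Matrix.det_permute]
      simp only [Matrix.of_apply]
      ring
    simp_rw [h1]
    rw [← Finset.mul_sum, ← Matrix.det_apply']
    ring
  have hperm : ∀ τ : Equiv.Perm (Fin n),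
      Integrable (fun ω : Fin n → Ω => Φ (fun i => ω (τ i))) (Measure.pi fun _ => μ) := by
    intro τ
    have h := measurePreserving_piCongrLeft (fun _ : Fin n => μ) τ.symm
    have h2 := (h.integrable_comp_emb (MeasurableEquiv.measurableEmbedding _)).2 hΦi
    convert h2 using 1
    ext ω
    simp only [Function.comp]
    congr 1
    ext i
    have := Equiv.piCongrLeft_apply_apply (fun _ : Fin n => Ω) τ.symm ω (τ i)
    simp only [Equiv.symm_apply_apply] at this
    exact this.symm
  constructor
  · simp_rw [← hsym]
    rw [integral_finsetSum _ fun τ _ => hperm τ]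
    simp_rw [integral_perm]
    rw [hdet, Finset.sum_const, Finset.card_univ, Fintype.card_perm, Fintype.card_fin, nsmul_eq_mul]
  · simp_rw [← hsym]
    exact integrable_finsetSum _ fun τ _ => hperm τ

/-- the Cauchy density -/
noncomputable def cw (t : ℝ) : ℝ := Real.pi⁻¹ * (1 + t ^ 2)⁻¹

lemma cw_pos (t : ℝ) : 0 < cw t := by
  unfold cw; have := Real.pi_pos; positivity

lemma cw_le (t : ℝ) : cw t ≤ 1 := by
  unfold cw
  have h1 : Real.pi⁻¹ ≤ 1 := inv_le_one_of_one_le₀ (by have := Real.pi_gt_three; linarith)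
  have h2 : (1 + t ^ 2)⁻¹ ≤ 1 := inv_le_one_of_one_le₀ (by nlinarith)
  have h3 : 0 ≤ (1 + t ^ 2)⁻¹ := by positivity
  calc _ ≤ (1:ℝ) * 1 := by gcongr
    _ = 1 := by norm_num

lemma cw_meas : Measurable cw := by unfold cw; fun_prop

lemma cw_prod (n : ℕ) : ∫⁻ y : Fin n → ℝ, ENNReal.ofReal (∏ i, cw (y i)) = 1 := by
  have hi : Integrable cw := integrable_inv_one_add_sq.const_mul _
  rw [← ofReal_integral_eq_lintegral_ofReal]
  · rw [integral_fintype_prod_volume_eq_pow]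
    have : ∫ x, cw x = 1 := by
      unfold cw
      rw [integral_const_mul, integral_univ_inv_one_add_sq, inv_mul_cancel₀ Real.pi_pos.ne']
    simp [this]
  · exact Integrable.fintype_prod (f := fun _ => cw) (fun _ => hi)
  · exact Filter.Eventually.of_forall fun x => Finset.prod_nonneg fun i _ => (cw_pos _).le

lemma cw_inner {n : ℕ} (C : Matrix (Fin n) (Fin n) ℝ) :
    ENNReal.ofReal |C.det| ≤ 
      ∫⁻ x : Fin n → ℝ, ENNReal.ofReal ((∏ i, cw (x ⬝ᵥ C i)) * C.det ^ 2) := by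
  by_cases hC : C.det = 0
  · simp [hC]
  have hm : Measurable fun y : Fin n → ℝ => ENNReal.ofReal (∏ i, cw (y i)) := by
    have := cw_meas
    fun_prop
  have h := cov Cᵀ (by rwa [Matrix.det_transpose]) hm
  rw [cw_prod, Matrix.det_transpose] at h
  have e : ∀ x : Fin n → ℝ, ENNReal.ofReal ((∏ i, cw (x ⬝ᵥ C i)) * C.det ^ 2) =
      ENNReal.ofReal |C.det| * (ENNReal.ofReal |C.det| *
        ENNReal.ofReal (∏ i, cw ((x ᵥ* Cᵀ) i))) := by
    intro x
    rw [← ENNReal.ofReal_mul (abs_nonneg _), ← ENNReal.ofReal_mul (abs_nonneg _), ← sq_abs]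
    congr 1
    have : ∀ i, (x ᵥ* Cᵀ) i = x ⬝ᵥ C i := fun i => rfl
    simp_rw [this]
    ring
  simp_rw [e]
  rw [lintegral_const_mul' _ _ (by simp), lintegral_const_mul' _ _ (by simp), ← h, mul_one]

end Reisner


namespace Reisner

open scoped ENNReal Pointwise Matrix

variable {Ω : Type*} [MeasurableSpace Ω]

noncomputable def Ldot {n : ℕ} (u : Fin n → ℝ) : (Fin n → ℝ) →L[ℝ] ℝ :=
  ∑ j, u j • ContinuousLinearMap.proj (R := ℝ) (φ := fun _ : Fin n => ℝ) j

lemma Ldot_apply {n : ℕ} (u x : Fin n → ℝ) : Ldot u x = x ⬝ᵥ u := by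
  simp [Ldot, dotProduct, mul_comm]

lemma Ldot_norm {n : ℕ} (u : Fin n → ℝ) (hu : ∀ i, |u i| ≤ 1) : ‖Ldot u‖ ≤ n := by
  refine ContinuousLinearMap.opNorm_le_bound _ (Nat.cast_nonneg _) fun x => ?_
  rw [Ldot_apply, dotProduct]
  calc ‖∑ i, x i * u i‖ ≤ ∑ i : Fin n, ‖x i * u i‖ := norm_sum_le _ _
    _ ≤ ∑ i : Fin n, ‖x‖ := by
        refine Finset.sum_le_sum fun i _ => ?_
        rw [norm_mul]
        calc _ ≤ ‖x‖ * 1 := mul_le_mul (norm_le_pi_norm x i) (hu i) (abs_nonneg _) (norm_nonneg _)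
          _ = ‖x‖ := mul_one _
    _ = n * ‖x‖ := by simp

noncomputable def at1 (t : ℝ) : ℝ := Real.pi⁻¹ * Real.arctan t

lemma at1_abs (t : ℝ) : |at1 t| ≤ 1 / 2 := by
  unfold at1
  have hp := Real.pi_pos
  have h1 := Real.arctan_lt_pi_div_two t
  have h2 := Real.neg_pi_div_two_lt_arctan t
  rw [abs_mul, abs_of_pos (inv_pos.2 hp), inv_mul_le_iff₀ hp, abs_le]
  constructor <;> linarith

lemma at1_meas : Measurable at1 := by unfold at1; fun_prop

lemma at1_mono : StrictMono at1 := fun _ _ h =>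
  mul_lt_mul_of_pos_left (Real.arctan_strictMono h) (inv_pos.2 Real.pi_pos)

lemma at1_deriv (t : ℝ) : HasDerivAt at1 (cw t) t := by
  have := (Real.hasDerivAt_arctan t).const_mul Real.pi⁻¹
  rw [one_div] at this
  exact this

noncomputable def G {n : ℕ} (μ : Measure Ω) (v : Ω → Fin n → ℝ) (x : Fin n → ℝ) : Fin n → ℝ :=
  fun i => ∫ ω, at1 (x ⬝ᵥ v ω) * v ω i ∂μ

noncomputable def Mx {n : ℕ} (μ : Measure Ω) (v : Ω → Fin n → ℝ) (x : Fin n → ℝ) :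
    Matrix (Fin n) (Fin n) ℝ :=
  Matrix.of fun i j => ∫ ω, cw (x ⬝ᵥ v ω) * (v ω i * v ω j) ∂μ

lemma meas_dot {n : ℕ} {v : Ω → Fin n → ℝ} (hm : Measurable v) (x : Fin n → ℝ) :
    Measurable fun ω => x ⬝ᵥ v ω := by
  unfold dotProduct
  fun_prop

lemma G_int {n : ℕ} {μ : Measure Ω} [IsFiniteMeasure μ] {v : Ω → Fin n → ℝ} (hm : Measurable v)
    (hb : ∀ ω i, |v ω i| ≤ 1) (x : Fin n → ℝ) (i : Fin n) :
    Integrable (fun ω => at1 (x ⬝ᵥ v ω) * v ω i) μ := by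
  have h1 := at1_meas.comp (meas_dot hm x)
  have h2 : Measurable fun ω => v ω i := by fun_prop
  refine Integrable.of_bound (h1.mul h2).aestronglyMeasurable 1
    (Filter.Eventually.of_forall fun ω => ?_)
  rw [norm_mul]
  have := at1_abs (x ⬝ᵥ v ω)
  have := hb ω i
  calc _ ≤ (1:ℝ) * 1 := mul_le_mul (by rw [Real.norm_eq_abs]; linarith) this (abs_nonneg _) (by simp)
    _ = 1 := by norm_num

lemma M_int {n : ℕ} {μ : Measure Ω} [IsFiniteMeasure μ] {v : Ω → Fin n → ℝ} (hm : Measurable v)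
    (hb : ∀ ω i, |v ω i| ≤ 1) (x : Fin n → ℝ) (i j : Fin n) :
    Integrable (fun ω => cw (x ⬝ᵥ v ω) * (v ω i * v ω j)) μ := by
  have h1 := cw_meas.comp (meas_dot hm x)
  have h2 : ∀ i, Measurable fun ω => v ω i := by fun_prop
  refine Integrable.of_bound (h1.mul ((h2 i).mul (h2 j))).aestronglyMeasurable 1
    (Filter.Eventually.of_forall fun ω => ?_)
  rw [norm_mul, norm_mul]
  have h3 := cw_le (x ⬝ᵥ v ω)
  have h4 := cw_pos (x ⬝ᵥ v ω)
  calc _ ≤ (1:ℝ) * (1 * 1) := mul_le_mul (by rw [Real.norm_eq_abs, abs_of_pos h4]; exact h3)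
        (mul_le_mul (hb _ _) (hb _ _) (abs_nonneg _) (by simp)) (by positivity) (by simp)
    _ = 1 := by norm_num

lemma G_deriv {n : ℕ} {μ : Measure Ω} [IsFiniteMeasure μ] {v : Ω → Fin n → ℝ} (hm : Measurable v)
    (hb : ∀ ω i, |v ω i| ≤ 1) (x : Fin n → ℝ) :
    HasFDerivAt (G μ v) (Matrix.toLin' (Mx μ v x)).toContinuousLinearMap x := by
  rw [hasFDerivAt_pi']
  intro i
  have hLm : Measurable fun ω => Ldot (v ω) := by
    unfold Ldot
    fun_prop
  have hvm : Measurable fun ω => v ω i := by fun_prop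
  have hF'm : ∀ y, AEStronglyMeasurable (fun ω => (cw (y ⬝ᵥ v ω) * v ω i) • Ldot (v ω)) μ := by
    intro y
    exact (((cw_meas.comp (meas_dot hm y)).mul hvm).smul hLm).aestronglyMeasurable
  have hbd : ∀ ω y, ‖(cw (y ⬝ᵥ v ω) * v ω i) • Ldot (v ω)‖ ≤ n := by
    intro ω y
    rw [norm_smul, norm_mul]
    have h3 := cw_le (y ⬝ᵥ v ω)
    have h4 := cw_pos (y ⬝ᵥ v ω)
    calc _ ≤ (1 * 1 : ℝ) * n := mul_le_mul (mul_le_mul (by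
            rw [Real.norm_eq_abs, abs_of_pos h4]; exact h3) (hb _ _) (abs_nonneg _) (by simp))
            (Ldot_norm _ (hb ω)) (norm_nonneg _) (by simp)
      _ = n := by ring
  have key := hasFDerivAt_integral_of_dominated_of_fderiv_le (𝕜 := ℝ) (μ := μ)
    (F := fun y ω => at1 (y ⬝ᵥ v ω) * v ω i)
    (F' := fun y ω => (cw (y ⬝ᵥ v ω) * v ω i) • Ldot (v ω)) (x₀ := x)
    (s := Set.univ) (bound := fun _ => (n:ℝ)) Filter.univ_mem
    (Filter.Eventually.of_forall fun y => (G_int hm hb y i).aestronglyMeasurable)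
    (G_int hm hb x i) (hF'm x)
    (Filter.Eventually.of_forall fun ω y _ => hbd ω y)
    (integrable_const _)
    (Filter.Eventually.of_forall fun ω y _ => by
      have h1 : HasFDerivAt (fun y : Fin n → ℝ => y ⬝ᵥ v ω) (Ldot (v ω)) y := by
        have := (Ldot (v ω)).hasFDerivAt (x := y)
        simpa only [funext (Ldot_apply (v ω))] using this
      have h2 := ((at1_deriv (y ⬝ᵥ v ω)).comp_hasFDerivAt y h1).mul_const (v ω i)
      rw [smul_smul, mul_comm] at h2
      exact h2)
  refine HasFDerivAt.congr_fderiv key ?_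
  symm
  ext1 z
  rw [ContinuousLinearMap.integral_apply]
  · simp only [ContinuousLinearMap.coe_comp', Function.comp, LinearMap.coe_toContinuousLinearMap',
      ContinuousLinearMap.proj_apply, Matrix.toLin'_apply, Matrix.mulVec, dotProduct, Mx,
      Matrix.of_apply, ContinuousLinearMap.smul_apply, Ldot_apply, smul_eq_mul]
    simp_rw [← integral_mul_const]
    have hMi := fun j => (M_int (μ := μ) hm hb x i j).mul_const (z j)
    simp only [dotProduct] at hMi
    rw [← integral_finsetSum _ fun j _ => hMi j]
    congr 1
    ext ω
    rw [Finset.mul_sum]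
    refine Finset.sum_congr rfl fun j _ => ?_
    ring
  · exact Integrable.of_bound (hF'm x) n (Filter.Eventually.of_forall fun ω => hbd ω x)

lemma dot_G {n : ℕ} {μ : Measure Ω} [IsFiniteMeasure μ] {v : Ω → Fin n → ℝ} (hm : Measurable v)
    (hb : ∀ ω i, |v ω i| ≤ 1) (x ξ : Fin n → ℝ) :
    ξ ⬝ᵥ G μ v x = ∫ ω, at1 (x ⬝ᵥ v ω) * (ξ ⬝ᵥ v ω) ∂μ ∧
     Integrable (fun ω => at1 (x ⬝ᵥ v ω) * (ξ ⬝ᵥ v ω)) μ := by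
  have e : (fun ω => at1 (x ⬝ᵥ v ω) * (ξ ⬝ᵥ v ω)) =
      fun ω => ∑ i, ξ i * (at1 (x ⬝ᵥ v ω) * v ω i) := by
    ext ω
    rw [dotProduct.eq_def ξ, Finset.mul_sum]
    exact Finset.sum_congr rfl fun i _ => by ring
  rw [e]
  refine ⟨?_, integrable_finsetSum _ fun i _ => (G_int hm hb x i).const_mul _⟩
  rw [integral_finsetSum _ fun i _ => (G_int hm hb x i).const_mul _]
  simp_rw [integral_const_mul]
  rfl

lemma v_int {n : ℕ} {μ : Measure Ω} [IsFiniteMeasure μ] {v : Ω → Fin n → ℝ} (hm : Measurable v)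
    (hb : ∀ ω i, |v ω i| ≤ 1) : Integrable v μ := by
  refine Integrable.of_bound hm.aestronglyMeasurable 1 (Filter.Eventually.of_forall fun ω => ?_)
  exact (pi_norm_le_iff_of_nonneg zero_le_one).2 (hb ω)

lemma G_inj {n : ℕ} {μ : Measure Ω} [IsFiniteMeasure μ] {v : Ω → Fin n → ℝ} (hm : Measurable v)
    (hb : ∀ ω i, |v ω i| ≤ 1) (hpos : ∀ x, x ≠ 0 → 0 < hv μ v x) :
    Function.Injective (G μ v) := by
  intro x y hxy
  by_contra hne
  have hz : x - y ≠ 0 := sub_ne_zero.2 hne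
  obtain ⟨h1, i1⟩ := dot_G (μ := μ) hm hb x (x - y)
  obtain ⟨h2, i2⟩ := dot_G (μ := μ) hm hb y (x - y)
  have h0 : ∫ ω, (at1 (x ⬝ᵥ v ω) - at1 (y ⬝ᵥ v ω)) * ((x - y) ⬝ᵥ v ω) ∂μ = 0 := by
    simp_rw [sub_mul]
    rw [integral_sub i1 i2, ← h1, ← h2, hxy, sub_self]
  have hi : Integrable (fun ω => (at1 (x ⬝ᵥ v ω) - at1 (y ⬝ᵥ v ω)) * ((x - y) ⬝ᵥ v ω)) μ := by
    simp_rw [sub_mul]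
    exact i1.sub i2
  have key : ∀ a b : ℝ, 0 ≤ (at1 a - at1 b) * (a - b) ∧
      ((at1 a - at1 b) * (a - b) = 0 → a - b = 0) := by
    intro a b
    rcases lt_trichotomy a b with h | h | h
    · have := at1_mono h
      have : 0 < (at1 a - at1 b) * (a - b) :=
        mul_pos_of_neg_of_neg (by linarith) (by linarith)
      exact ⟨this.le, fun h' => by linarith⟩
    · subst h; simp
    · have := at1_mono h
      have : 0 < (at1 a - at1 b) * (a - b) :=
        mul_pos (by linarith) (by linarith)
      exact ⟨this.le, fun h' => by linarith⟩
  have hae := (integral_eq_zero_iff_of_nonneg (fun ω => by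
    have := (key (x ⬝ᵥ v ω) (y ⬝ᵥ v ω)).1
    simpa only [sub_dotProduct, Pi.zero_apply] using this) hi).1 h0
  have : hv μ v (x - y) = 0 := by
    unfold hv
    have : ∫ ω, |(x - y) ⬝ᵥ v ω| ∂μ = 0 := by
      rw [integral_eq_zero_of_ae]
      filter_upwards [hae] with ω hω
      simp only [sub_dotProduct, Pi.zero_apply, abs_eq_zero] at hω ⊢
      exact (key _ _).2 hω
    rw [this, mul_zero]
  exact (hpos _ hz).ne' this

lemma G_mem {n : ℕ} {μ : Measure Ω} [IsFiniteMeasure μ] {v : Ω → Fin n → ℝ} (hm : Measurable v)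
    (hb : ∀ ω i, |v ω i| ≤ 1) (x ξ : Fin n → ℝ) : ξ ⬝ᵥ G μ v x ≤ hv μ v ξ := by
  obtain ⟨h1, i1⟩ := dot_G (μ := μ) hm hb x ξ
  rw [h1, hv, ← integral_const_mul]
  refine integral_mono i1 ((integrable_dot (v_int hm hb) ξ).abs.const_mul _) fun ω => ?_
  calc _ ≤ |at1 (x ⬝ᵥ v ω) * (ξ ⬝ᵥ v ω)| := le_abs_self _
    _ ≤ _ := by
      rw [abs_mul]
      exact mul_le_mul_of_nonneg_right (at1_abs _) (abs_nonneg _)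

theorem thmB {n : ℕ} {μ : Measure Ω} [IsFiniteMeasure μ] {v : Ω → Fin n → ℝ} (hm : Measurable v)
    (hb : ∀ ω i, |v ω i| ≤ 1) (hpos : ∀ x, x ≠ 0 → 0 < hv μ v x) (S : Set (Fin n → ℝ))
    (hS : ∀ p, (∀ ξ, ξ ⬝ᵥ p ≤ hv μ v ξ) → p ∈ S) :
    D μ v ≤ n.factorial * volume S := by
  have himg : ∫⁻ x : Fin n → ℝ, ENNReal.ofReal |(Mx μ v x).det| ≤ volume S := by
    have h := lintegral_abs_det_fderiv_eq_addHaar_image volume (MeasurableSet.univ)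
      (fun x _ => (G_deriv (μ := μ) hm hb x).hasFDerivWithinAt) (G_inj hm hb hpos).injOn
    simp only [setLIntegral_univ] at h
    have e : ∀ x, (Matrix.toLin' (Mx μ v x)).toContinuousLinearMap.det = (Mx μ v x).det := by
      intro x
      rw [ContinuousLinearMap.det]
      simp
    simp_rw [e] at h
    rw [h]
    refine measure_mono ?_
    rintro _ ⟨x, -, rfl⟩
    exact hS _ fun ξ => G_mem hm hb x ξ
  have hdet : ∀ x, (n.factorial : ℝ≥0∞) * ENNReal.ofReal |(Mx μ v x).det| =
      ∫⁻ ω : Fin n → Ω, ENNReal.ofReal ((∏ i, cw (x ⬝ᵥ v (ω i))) *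
        (Matrix.of fun i => v (ω i)).det ^ 2) ∂(Measure.pi fun _ => μ) := by
    intro x
    obtain ⟨h1, h2⟩ := cauchy_binet (μ := μ) (fun ω => cw (x ⬝ᵥ v ω)) v (M_int hm hb x)
    have hnn : ∀ ω : Fin n → Ω, 0 ≤ (∏ i, cw (x ⬝ᵥ v (ω i))) *
        (Matrix.of fun i => v (ω i)).det ^ 2 := fun ω =>
      mul_nonneg (Finset.prod_nonneg fun i _ => (cw_pos _).le) (sq_nonneg _)
    rw [← ofReal_integral_eq_lintegral_ofReal h2 (Filter.Eventually.of_forall hnn), ← h1]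
    have h3 : 0 ≤ (Mx μ v x).det := by
      have : 0 ≤ (n.factorial : ℝ) * (Mx μ v x).det := by
        rw [Mx, h1]
        exact integral_nonneg hnn
      exact nonneg_of_mul_nonneg_right this (by positivity)
    rw [abs_of_nonneg h3, ENNReal.ofReal_mul (by positivity), ENNReal.ofReal_natCast]
    rfl
  have hjm : Measurable fun p : (Fin n → Ω) × (Fin n → ℝ) =>
      ENNReal.ofReal ((∏ i, cw (p.2 ⬝ᵥ v (p.1 i))) *
        (Matrix.of fun i => v (p.1 i)).det ^ 2) := by
    have hd : Measurable fun ω : Fin n → Ω => (Matrix.of fun i => v (ω i)).det := by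
      simp only [Matrix.det_apply', Matrix.of_apply]
      fun_prop
    have hc := cw_meas
    have h1 : ∀ i, Measurable fun p : (Fin n → Ω) × (Fin n → ℝ) => cw (p.2 ⬝ᵥ v (p.1 i)) := by
      intro i
      refine hc.comp ?_
      unfold dotProduct
      fun_prop
    exact ((Finset.measurable_prod _ fun i _ => h1 i).mul
      ((hd.comp measurable_fst).pow_const 2)).ennreal_ofReal
  calc D μ v ≤ ∫⁻ ω : Fin n → Ω, ∫⁻ x : Fin n → ℝ, ENNReal.ofReal ((∏ i, cw (x ⬝ᵥ v (ω i))) *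
        (Matrix.of fun i => v (ω i)).det ^ 2) ∂volume ∂(Measure.pi fun _ => μ) :=
        lintegral_mono fun ω => cw_inner (Matrix.of fun i => v (ω i))
    _ = ∫⁻ x : Fin n → ℝ, ∫⁻ ω : Fin n → Ω, ENNReal.ofReal ((∏ i, cw (x ⬝ᵥ v (ω i))) *
        (Matrix.of fun i => v (ω i)).det ^ 2) ∂(Measure.pi fun _ => μ) :=
        lintegral_lintegral_swap hjm.aemeasurable
    _ = ∫⁻ x : Fin n → ℝ, (n.factorial : ℝ≥0∞) * ENNReal.ofReal |(Mx μ v x).det| := by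
        simp_rw [hdet]
    _ = n.factorial * ∫⁻ x : Fin n → ℝ, ENNReal.ofReal |(Mx μ v x).det| :=
        lintegral_const_mul' _ _ (by simp)
    _ ≤ _ := by gcongr

end Reisner


namespace Reisner

open scoped ENNReal Pointwise Matrix

lemma zero_int {N : ℕ} {B : Set (Fin N → ℝ)} (hBconv : Convex ℝ B) (hBsym : B = -B)
    (hBint : (interior B).Nonempty) : ∃ r > 0, Metric.closedBall (0 : Fin N → ℝ) r ⊆ B := by
  obtain ⟨x, hx⟩ := hBint
  have hnx : -x ∈ interior B := by
    rw [mem_interior] at hx ⊢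
    obtain ⟨t, ht, hto, hxt⟩ := hx
    refine ⟨-t, ?_, hto.neg, by simpa using hxt⟩
    rw [hBsym]
    exact Set.neg_subset_neg.2 ht
  have h0 : (0 : Fin N → ℝ) ∈ interior B := by
    have := hBconv.interior hx hnx (a := 1 / 2) (b := 1 / 2) (by norm_num) (by norm_num)
      (by norm_num)
    simpa using this
  exact (Metric.nhds_basis_closedBall.mem_iff).1 (mem_interior_iff_mem_nhds.1 h0)

lemma polar_facts {N : ℕ} {B : Set (Fin N → ℝ)}
    (hBcpt : IsCompact B) (hBconv : Convex ℝ B) (hBsym : B = -B)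
    (hBint : (interior B).Nonempty)
    (Bstar : Set (Fin N → ℝ))
    (hBstar : Bstar = {η | ∀ ξ ∈ B, ξ ⬝ᵥ η ≤ 1}) (h : (Fin N → ℝ) → ℝ)
    (hh : ∀ ξ, sSup ((fun η => ξ ⬝ᵥ η) '' Bstar) = h ξ) :
    (∀ x, x ≠ 0 → 0 < h x) ∧ {x | h x < 1} ⊆ B ∧
      ∀ p, (∀ ξ, ξ ⬝ᵥ p ≤ h ξ) → p ∈ Bstar := by
  obtain ⟨r, hr, hrB⟩ := zero_int hBconv hBsym hBint
  have h0B : (0 : Fin N → ℝ) ∈ B := hrB (by simp [hr.le])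
  have hle : ∀ ξ, ∀ η ∈ Bstar, ξ ⬝ᵥ η ≤ h ξ := by
    intro ξ η hη
    rw [← hh]
    refine le_csSup ⟨(‖ξ‖ + 1) / r, ?_⟩ ⟨η, hη, rfl⟩
    rintro _ ⟨η, hη, rfl⟩
    have hn : 0 < ‖ξ‖ + 1 := by positivity
    have hm : (r / (‖ξ‖ + 1)) • ξ ∈ B := by
      apply hrB
      rw [mem_closedBall_zero_iff, norm_smul, Real.norm_eq_abs, abs_of_pos (by positivity),
        div_mul_eq_mul_div, div_le_iff₀ hn]
      nlinarith [norm_nonneg ξ]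
    rw [hBstar] at hη
    have h1 := hη _ hm
    rw [smul_dotProduct, smul_eq_mul, div_mul_eq_mul_div, div_le_one hn] at h1
    rw [le_div_iff₀ hr]
    linarith
  refine ⟨?_, ?_, ?_⟩
  · intro x hx
    obtain ⟨R, hR0, hR⟩ := hBcpt.isBounded.exists_pos_norm_le
    set s : ℝ := ∑ i, |x i| with hs
    have hs0 : 0 ≤ s := Finset.sum_nonneg fun i _ => abs_nonneg _
    have hc : 0 < R * s + 1 := by positivity
    have hmem : (R * s + 1)⁻¹ • x ∈ Bstar := by
      rw [hBstar]
      intro ξ hξ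
      rw [dotProduct_smul, smul_eq_mul, inv_mul_le_iff₀ hc, mul_one]
      have : ξ ⬝ᵥ x ≤ R * s := by
        rw [hs, Finset.mul_sum, dotProduct]
        refine Finset.sum_le_sum fun i _ => ?_
        calc _ ≤ |ξ i * x i| := le_abs_self _
          _ = |ξ i| * |x i| := abs_mul _ _
          _ ≤ R * |x i| := mul_le_mul_of_nonneg_right
            ((norm_le_pi_norm ξ i).trans (hR ξ hξ)) (abs_nonneg _)
      linarith
    have h1 := hle x _ hmem
    rw [dotProduct_smul, smul_eq_mul] at h1
    have h2 : 0 < x ⬝ᵥ x := by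
      refine lt_of_le_of_ne (Finset.sum_nonneg fun i _ => mul_self_nonneg _) fun h0 => hx ?_
      exact dotProduct_self_eq_zero.1 h0.symm
    exact lt_of_lt_of_le (mul_pos (inv_pos.2 hc) h2) h1
  · intro x hx
    by_contra hxB
    obtain ⟨f, u, hfu, hux⟩ := geometric_hahn_banach_closed_point hBconv hBcpt.isClosed hxB
    have hu : 0 < u := by simpa using hfu 0 h0B
    have hf : ∀ ξ, ξ ⬝ᵥ (fun i => f (Pi.single i 1)) = f ξ := by
      intro ξ
      conv_rhs => rw [pi_eq_sum_univ' ξ]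
      simp only [map_sum, map_smul, smul_eq_mul, dotProduct]
    have hmem : u⁻¹ • (fun i => f (Pi.single i 1)) ∈ Bstar := by
      rw [hBstar]
      intro ξ hξ
      rw [dotProduct_smul, smul_eq_mul, inv_mul_le_iff₀ hu, mul_one, hf]
      exact (hfu ξ hξ).le
    have h1 := hle x _ hmem
    rw [dotProduct_smul, smul_eq_mul, hf, inv_mul_le_iff₀ hu] at h1
    have : h x < 1 := hx
    nlinarith
  · intro p hp
    rw [hBstar]
    intro ξ hξ
    refine (hp ξ).trans ?_
    rw [← hh]
    refine Real.sSup_le ?_ zero_le_one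
    rintro _ ⟨η, hη, rfl⟩
    rw [hBstar] at hη
    exact hη ξ hξ

end Reisner

open Reisner
/-- Reisner's theorem: if `B ⊂ ℝ^N` is a compact convex symmetric body whose
polar body `B*` is a zonoid, then `4^N / N! ≤ Vol(B) Vol(B*)`. -/
theorem stmt10 (N : ℕ) (B : Set (Fin N → ℝ))
    (hBcpt : IsCompact B) (hBconv : Convex ℝ B) (hBsym : B = -B)
    (hBint : (interior B).Nonempty)
    (Bstar : Set (Fin N → ℝ))
    (hBstar : Bstar = {η | ∀ ξ ∈ B, (∑ i, ξ i * η i) ≤ 1})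
    -- `B*` is a zonoid: its support function is `ξ ↦ ½ ∫_{Σ_{N-1}} |⟨ξ,η⟩| dρ(η)`
    -- for some finite even Borel measure `ρ` on the unit sphere.
    (hzon : ∃ ρ : Measure (Fin N → ℝ), IsFiniteMeasure ρ ∧
      ρ.map (fun η => -η) = ρ ∧
      ρ {η : Fin N → ℝ | (∑ i, (η i) ^ 2) ≠ 1} = 0 ∧
      ∀ ξ : Fin N → ℝ,
        sSup ((fun η => ∑ i, ξ i * η i) '' Bstar) =
          (1 / 2) * ∫ η, |∑ i, ξ i * η i| ∂ρ) :
    ENNReal.ofReal (4 ^ N / (N.factorial : ℝ)) ≤ volume B * volume Bstar := by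
  obtain ⟨ρ, hfin, -, hsph, hsup⟩ := hzon
  classical
  set s : Set (Fin N → ℝ) := {η | ∀ i, |η i| ≤ 1} with hs
  have hsm : MeasurableSet s := by
    rw [hs, Set.setOf_forall]
    exact MeasurableSet.iInter fun i => measurableSet_le (by fun_prop) measurable_const
  set v : (Fin N → ℝ) → Fin N → ℝ := s.indicator id with hvdef
  have hm : Measurable v := measurable_id.indicator hsm
  have hb : ∀ ω i, |v ω i| ≤ 1 := by
    intro ω i
    by_cases h : ω ∈ s
    · rw [hvdef, Set.indicator_of_mem h]
      exact h i
    · rw [hvdef, Set.indicator_of_notMem h]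
      simp
  have hae : ∀ᵐ η ∂ρ, v η = η := by
    have : ∀ᵐ η ∂ρ, ∑ i, (η i) ^ 2 = 1 := by
      rw [ae_iff]; exact hsph
    filter_upwards [this] with η hη
    have hmem : η ∈ s := by
      intro i
      have h1 : (η i) ^ 2 ≤ ∑ i, (η i) ^ 2 :=
        Finset.single_le_sum (f := fun i => (η i) ^ 2) (fun i _ => sq_nonneg _) (Finset.mem_univ i)
      rw [hη] at h1
      exact (sq_le_one_iff_abs_le_one _).1 h1
    rw [hvdef, Set.indicator_of_mem hmem]
    rfl
  have hhv : ∀ ξ, sSup ((fun η => ξ ⬝ᵥ η) '' Bstar) = hv ρ v ξ := by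
    intro ξ
    rw [hv]
    refine (hsup ξ).trans ?_
    congr 1
    refine integral_congr_ae ?_
    filter_upwards [hae] with η hη
    rw [hη]
    rfl
  obtain ⟨hpos, hsub, hmem⟩ := polar_facts hBcpt hBconv hBsym hBint Bstar hBstar (hv ρ v) hhv
  have hA := thmA (μ := ρ) N v hm (v_int hm hb) hpos
  have hB := thmB (μ := ρ) hm hb hpos Bstar hmem
  have hJ := (J_facts (μ := ρ) (v_int hm hb) hpos).1
  have hJ2 : J ρ v ≤ N.factorial * volume B := by
    rw [hJ]
    gcongr
  have key : (4 ^ N * N.factorial : ENNReal) ≤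
      (N.factorial * volume B) * (N.factorial * volume Bstar) := by
    refine hA.trans ?_
    gcongr
  have hN0 : (N.factorial : ENNReal) ≠ 0 := by exact_mod_cast N.factorial_ne_zero
  have hNt : (N.factorial : ENNReal) ≠ ⊤ := ENNReal.natCast_ne_top _
  have key2 : (4 ^ N : ENNReal) ≤ volume B * volume Bstar * N.factorial := by
    refine (ENNReal.mul_le_mul_iff_left hN0 hNt).1 (key.trans_eq ?_)
    ring
  rw [ENNReal.ofReal_div_of_pos (by positivity), ENNReal.ofReal_natCast,
    ENNReal.ofReal_pow (by norm_num)]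
  refine ENNReal.div_le_of_le_mul ?_
  simpa using key2
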